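/- Let Γ ≤ Δ be countable discrete groups with [Δ : Γ] = ∞. Then for every invariant random subgroup θ of Γ, the co-induced invariant random subgroup CIND_Γ^Δ(θ) of Δ is weakly mixing (for the conjugation action of Δ). -/

import Mathlib

open MeasureTheory

namespace IRSPaper


/-! ## Basic setup: the space of subgroups, invariant random subgroups -/

/-- The conjugation action of a group on its space of subgroups: `g • H = gHg⁻¹`. -/
def conjSub {G : Type*} [Group G] (g : G) (H : Subgroup G) : Subgroup G :=
  Subgroup.map ((MulAut.conj g).toMonoidHom) H

/-- The topology on the space of subgroups of `G`, induced from the product topology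
on `G → Bool` (i.e. the topology of `2^G`). -/
noncomputable instance instTopSub (G : Type*) [Group G] : TopologicalSpace (Subgroup G) :=
  TopologicalSpace.induced
    (fun (H : Subgroup G) (g : G) => @decide (g ∈ H) (Classical.dec _)) inferInstance

/-- The Borel σ-algebra on the space of subgroups. -/
noncomputable instance instMeasSub (G : Type*) [Group G] : MeasurableSpace (Subgroup G) :=
  borel _

instance instBorelSub (G : Type*) [Group G] : BorelSpace (Subgroup G) := ⟨rfl⟩

/-- An invariant random subgroup: a Borel probability measure on `Sub(G)` which is invariant
under the conjugation action of `G`. -/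
def IsIRS {G : Type*} [Group G] (θ : Measure (Subgroup G)) : Prop :=
  IsProbabilityMeasure θ ∧ ∀ g : G, Measure.map (conjSub g) θ = θ

/-- The basic set `N_F = {H ∈ Sub(G) : F ⊆ H}`. -/
def NSet {G : Type*} [Group G] (F : Set G) : Set (Subgroup G) :=
  {H : Subgroup G | F ⊆ (H : Set G)}

/-- For `Γ ≤ Δ` and `S ⊆ Δ`, the set of subgroups of `Γ` containing every element of `Γ`
whose image in `Δ` lies in `S`.  When `S = t⁻¹Ft ⊆ Γ`, this is exactly the basic set
`N_{t⁻¹Ft}^Γ ⊆ Sub(Γ)`. -/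
def NpullSet {Δ : Type*} [Group Δ] (Γ : Subgroup Δ) (S : Set Δ) : Set (Subgroup ↥Γ) :=
  {Λ : Subgroup ↥Γ | ∀ x : ↥Γ, (x : Δ) ∈ S → x ∈ Λ}

/-- `T` is a transversal for the left cosets `Δ/Γ`: each left coset `dΓ` contains exactly
one element of `T`. -/
def IsLeftTransversal {Δ : Type*} [Group Δ] (Γ : Subgroup Δ) (T : Set Δ) : Prop :=
  ∀ d : Δ, ∃! t : Δ, t ∈ T ∧ d⁻¹ * t ∈ Γ

/-- The defining property of the co-induced invariant random subgroup
`ν = CIND_Γ^Δ(θ)` (with respect to the transversal `T`):  for every finite `F ⊆ Δ`,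
`ν(N_F) = 0` if `F ⊄ core_Δ(Γ)` and `ν(N_F) = ∏_{t ∈ T} θ(N_{t⁻¹Ft}^Γ)` if `F ⊆ core_Δ(Γ)`. -/
def CindSpec {Δ : Type*} [Group Δ] (Γ : Subgroup Δ) (T : Set Δ)
    (θ : Measure (Subgroup ↥Γ)) (ν : Measure (Subgroup Δ)) : Prop :=
  ∀ F : Finset Δ,
    (¬ (F : Set Δ) ⊆ (Γ.normalCore : Set Δ) → ν (NSet (F : Set Δ)) = 0) ∧
    ((F : Set Δ) ⊆ (Γ.normalCore : Set Δ) →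
      ν (NSet (F : Set Δ)) =
        ∏' t : T, θ (NpullSet Γ ((fun d => (t : Δ)⁻¹ * d * (t : Δ)) '' (F : Set Δ))))

/-- Ergodicity of a (not necessarily probability-) measure-preserving action given by
an explicit family of maps: every invariant measurable set is null or conull. -/
def ErgodicAct {G α : Type*} [MeasurableSpace α] (act : G → α → α) (μ : Measure α) : Prop :=
  ∀ s : Set α, MeasurableSet s → (∀ g : G, act g ⁻¹' s = s) → μ s = 0 ∨ μ sᶜ = 0

/-- Weak mixing of an action: the diagonal action on the square is ergodic. -/
def WeaklyMixingAct {G α : Type*} [MeasurableSpace α] (act : G → α → α) (μ : Measure α) : Prop :=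
  ErgodicAct (fun (g : G) (p : α × α) => (act g p.1, act g p.2)) (μ.prod μ)

/-- A measure is non-atomic (has no atoms) if every singleton is null. -/
def NonAtomicMeasure {α : Type*} [MeasurableSpace α] (μ : Measure α) : Prop :=
  ∀ x : α, μ {x} = 0

/-- The kernel of an IRS `θ` of `Γ`: the set of `γ ∈ Γ` with `θ(N_γ) = 1`.  (For a probability
measure this set is a subgroup; taking `Subgroup.closure` makes it a `Subgroup` on the nose.) -/
def kerIRS {Δ : Type*} [Group Δ] (Γ : Subgroup Δ) (θ : Measure (Subgroup ↥Γ)) : Subgroup ↥Γ :=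
  Subgroup.closure {x : ↥Γ | θ {Λ : Subgroup ↥Γ | x ∈ Λ} = 1}

/-- `core_Δ(ker(θ))`, viewed as a subgroup of `Δ`. -/
def coreKer {Δ : Type*} [Group Δ] (Γ : Subgroup Δ) (θ : Measure (Subgroup ↥Γ)) : Subgroup Δ :=
  ((kerIRS Γ θ).map Γ.subtype).normalCore

/-!
Write `w_F(q)`, for a coset `q = tΓ`, for the factor `θ(N_{t⁻¹Ft})`, so that
`ν(N_F) = ∏_q w_F(q)` when `F` lies in the core. If `g` moves a finite set `K` of cosets off itself,
then `ν(N_F ∩ N_{g⁻¹Fg}) ≤ (∏_{q ∈ K} w_F(q))²`, and by B. H. Neumann's covering lemma an infinite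
coset space admits such a `g` for every `K`. Letting `K` grow, one gets
`limsup ν(N_F ∩ N_{g⁻¹Fg}) ≤ ν(N_F)²` as `g` leaves every set `{g | g • q = q'}`, and this bound
passes to the rectangles `N_F ×ˢ N_{F'}`.

One-sided bounds suffice for ergodicity: if infinitely many translates of `A` have pairwise
correlations at most `ε`, then Cauchy–Schwarz in `L²` makes the common correlation of these
translates with a fixed invariant set `O(√ε)`. Hence an invariant set is independent of a generating
π-system, so of itself.
-/

section EscapeFilter

open Filter MulAction
open scoped Pointwise

variable {G X : Type*} [Group G] [MulAction G X]

theorem exists_forall_smul_ne (horbit : ∀ x : X, (orbit G x).Infinite) {P : Set (X × X)}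
    (hP : P.Finite) : ∃ g : G, ∀ p ∈ P, g • p.1 ≠ p.2 := by
  by_contra! hmeets
  let transporter (p : X × X) : G := Classical.epsilon fun g => g • p.1 = p.2
  have hcover : ⋃ p ∈ hP.toFinset, transporter p • (stabilizer G p.1 : Set G) = Set.univ := by
    refine Set.eq_univ_of_forall fun g => ?_
    obtain ⟨p, hp, hgp⟩ := hmeets g
    have htransporter : transporter p • p.1 = p.2 :=
      Classical.epsilon_spec (p := fun g : G => g • p.1 = p.2) ⟨g, hgp⟩
    refine Set.mem_biUnion (hP.mem_toFinset.2 hp) (Set.mem_smul_set_iff_inv_smul_mem.2 ?_)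
    rw [smul_eq_mul, SetLike.mem_coe, mem_stabilizer_iff, mul_smul, hgp, inv_smul_eq_iff,
      htransporter]
  obtain ⟨p, -, hfinite⟩ := Subgroup.exists_finiteIndex_of_leftCoset_cover hcover
  exact hfinite.index_ne_zero ((index_stabilizer G p.1).trans (horbit p.1).ncard)

/-- The filter of neighbourhoods of infinity on a group acting on `X`: it is generated by the sets
`{g | g • x ≠ y}`, so that `g • K` is eventually disjoint from `L` for all finite `K`, `L ⊆ X`. -/
def escapeFilter (G X : Type*) [Group G] [MulAction G X] : Filter G :=
  ⨅ p : X × X, 𝓟 {g | g • p.1 ≠ p.2}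

theorem eventually_escapeFilter_smul_ne (x y : X) : ∀ᶠ g in escapeFilter G X, g • x ≠ y :=
  mem_iInf_of_mem (x, y) (mem_principal_self _)

theorem eventually_disjoint_image_inv_smul [DecidableEq X] (K : Finset X) :
    ∀ᶠ g in escapeFilter G X, Disjoint K (K.image (g⁻¹ • ·)) := by
  have hmoved : ∀ᶠ g in escapeFilter G X, ∀ x ∈ K, ∀ y ∈ K, g • x ≠ y :=
    (eventually_all_finset K).2 fun x _ => (eventually_all_finset K).2 fun y _ =>
      eventually_escapeFilter_smul_ne x y
  filter_upwards [hmoved] with g hg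
  refine Finset.disjoint_left.2 fun x hx hxim => ?_
  obtain ⟨y, hy, rfl⟩ := Finset.mem_image.1 hxim
  exact hg _ hx y hy (smul_inv_smul g y)

theorem tendsto_mul_right_escapeFilter (d : G) :
    Tendsto (· * d) (escapeFilter G X) (escapeFilter G X) := by
  refine tendsto_iInf.2 fun p => tendsto_principal.2 ?_
  simpa only [Set.mem_ofPred_eq, mul_smul] using
    eventually_escapeFilter_smul_ne (G := G) (d • p.1) p.2

theorem escapeFilter_neBot (horbit : ∀ x : X, (orbit G x).Infinite) :
    (escapeFilter G X).NeBot := by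
  refine (hasBasis_iInf_principal_finite _).neBot_iff.2 fun hP => ?_
  obtain ⟨g, hg⟩ := exists_forall_smul_ne horbit hP
  exact ⟨g, Set.mem_iInter₂.2 hg⟩

theorem escapeFilter_quotient_neBot (H : Subgroup G) [Infinite (G ⧸ H)] :
    (escapeFilter G (G ⧸ H)).NeBot :=
  escapeFilter_neBot fun q => by simpa only [orbit_eq_univ] using Set.infinite_univ

end EscapeFilter

section Correlation

open Filter Topology
open scoped RealInnerProductSpace

variable {E : Type*} [NormedAddCommGroup E] [InnerProductSpace ℝ E]

theorem norm_sum_sq_le_of_pairwise_inner_le {ι : Type*} (s : Finset ι) {v : ι → E} {C ε : ℝ}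
    (hself : ∀ i, ⟪v i, v i⟫ ≤ C) (hpair : Pairwise fun i j => ⟪v i, v j⟫ ≤ ε) :
    ‖∑ i ∈ s, v i‖ ^ 2 ≤ (s.card : ℝ) ^ 2 * ε + s.card * (C - ε) := by
  classical
  have hentry (i j : ι) : ⟪v i, v j⟫ ≤ ε + if i = j then C - ε else 0 := by
    split_ifs with hij
    · simpa [hij] using hself j
    · simpa using hpair hij
  calc ‖∑ i ∈ s, v i‖ ^ 2 = ∑ i ∈ s, ∑ j ∈ s, ⟪v i, v j⟫ := by
        simp_rw [← real_inner_self_eq_norm_sq, sum_inner, inner_sum]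
    _ ≤ ∑ i ∈ s, ∑ j ∈ s, (ε + if i = j then C - ε else 0) :=
        Finset.sum_le_sum fun i _ => Finset.sum_le_sum fun j _ => hentry i j
    _ = ∑ _i ∈ s, (s.card * ε + (C - ε)) :=
        Finset.sum_congr rfl fun i hi => by simp [Finset.sum_add_distrib, hi]
    _ = (s.card : ℝ) ^ 2 * ε + s.card * (C - ε) := by
        rw [Finset.sum_const, nsmul_eq_mul]
        ring

theorem sq_le_mul_norm_sq_of_inner_eq {v : ℕ → E} {h : E} {C ε k : ℝ}
    (hself : ∀ i, ⟪v i, v i⟫ ≤ C) (hpair : Pairwise fun i j => ⟪v i, v j⟫ ≤ ε)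
    (hinner : ∀ i, ⟪v i, h⟫ = k) : k ^ 2 ≤ ε * ‖h‖ ^ 2 := by
  have hbound (n : ℕ) (hn : 0 < n) : k ^ 2 ≤ (ε + (C - ε) / n) * ‖h‖ ^ 2 := by
    have hn' : (0 : ℝ) < n := Nat.cast_pos.2 hn
    have hsum : ⟪∑ i ∈ Finset.range n, v i, h⟫ = n * k := by simp [sum_inner, hinner]
    refine le_of_mul_le_mul_left ?_ (pow_pos hn' 2)
    calc (n : ℝ) ^ 2 * k ^ 2 = ⟪∑ i ∈ Finset.range n, v i, h⟫ ^ 2 := by rw [hsum, mul_pow]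
      _ ≤ (‖∑ i ∈ Finset.range n, v i‖ * ‖h‖) ^ 2 :=
          sq_le_sq' (neg_le_of_abs_le (abs_real_inner_le_norm _ _)) (real_inner_le_norm _ _)
      _ ≤ ((n : ℝ) ^ 2 * ε + n * (C - ε)) * ‖h‖ ^ 2 := by
          rw [mul_pow]
          gcongr
          simpa using norm_sum_sq_le_of_pairwise_inner_le (Finset.range n) hself hpair
      _ = (n : ℝ) ^ 2 * ((ε + (C - ε) / n) * ‖h‖ ^ 2) := by field_simp
  have hlim : Tendsto (fun n : ℕ => (ε + (C - ε) / n) * ‖h‖ ^ 2) atTop (𝓝 (ε * ‖h‖ ^ 2)) := by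
    simpa using ((tendsto_const_div_atTop_nhds_zero_nat (C - ε)).const_add ε).mul_const (‖h‖ ^ 2)
  exact ge_of_tendsto hlim ((eventually_gt_atTop 0).mono hbound)

variable {Ω : Type*} [MeasurableSpace Ω] (μ : Measure Ω) [IsProbabilityMeasure μ]

/-- The vector `1_s - μ(s)` of `L²(μ)`, whose inner products are the correlations of events. -/
noncomputable def centeredIndicator {s : Set Ω} (hs : MeasurableSet s) : Lp ℝ 2 μ :=
  indicatorConstLp 2 hs (measure_ne_top μ s) 1 -
    μ.real s • indicatorConstLp 2 MeasurableSet.univ (measure_ne_top μ Set.univ) 1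

theorem inner_centeredIndicator {s t : Set Ω} (hs : MeasurableSet s) (ht : MeasurableSet t) :
    ⟪centeredIndicator μ hs, centeredIndicator μ ht⟫ = μ.real (s ∩ t) - μ.real s * μ.real t := by
  simp only [centeredIndicator, inner_sub_left, inner_sub_right, real_inner_smul_left,
    real_inner_smul_right, L2.real_inner_indicatorConstLp_one_indicatorConstLp_one,
    Set.inter_univ, Set.univ_inter, probReal_univ]
  ring

theorem measureReal_inter_eq_mul_of_forall_exists_seq {S : Set Ω} (hS : MeasurableSet S) {a b : ℝ}
    (hseq : ∀ ε > 0, ∃ A : ℕ → Set Ω, (∀ i, MeasurableSet (A i)) ∧ (∀ i, μ.real (A i) = a) ∧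
      (∀ i, μ.real (A i ∩ S) = b) ∧ Pairwise fun i j => μ.real (A i ∩ A j) ≤ a ^ 2 + ε) :
    b = a * μ.real S := by
  have hbound : ∀ ε > 0, (b - a * μ.real S) ^ 2 ≤ ε * ‖centeredIndicator μ hS‖ ^ 2 := by
    intro ε hε
    obtain ⟨A, hA, hAa, hAb, hpair⟩ := hseq ε hε
    refine sq_le_mul_norm_sq_of_inner_eq (v := fun i => centeredIndicator μ (hA i)) (C := 1)
      (fun i => ?_) (fun i j hij => ?_) (fun i => ?_)
    · rw [inner_centeredIndicator, Set.inter_self]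
      nlinarith [measureReal_le_one (μ := μ) (s := A i), sq_nonneg (μ.real (A i))]
    · have hcorr : ⟪centeredIndicator μ (hA i), centeredIndicator μ (hA j)⟫ ≤ ε := by
        rw [inner_centeredIndicator, hAa, hAa]
        linarith [hpair hij]
      exact hcorr
    · rw [inner_centeredIndicator, hAa, hAb]
  have hlim : Tendsto (fun ε : ℝ => ε * ‖centeredIndicator μ hS‖ ^ 2) (𝓝[>] 0) (𝓝 0) := by
    simpa using ((continuous_mul_const (‖centeredIndicator μ hS‖ ^ 2)).tendsto 0).mono_left
      nhdsWithin_le_nhds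
  have hsq : (b - a * μ.real S) ^ 2 ≤ 0 :=
    ge_of_tendsto hlim (eventually_mem_nhdsWithin.mono hbound)
  exact sub_eq_zero.1 (pow_eq_zero_iff two_ne_zero |>.1 (hsq.antisymm (sq_nonneg _)))

end Correlation

section ErgodicityCriterion

open Filter

variable {G α : Type*} [MeasurableSpace α] {act : G → α → α} {μ : Measure α}
  {l : Filter G} {A B S : Set α} {C : Set (Set α)}

/-- The event `A` is asymptotically at most independent of its translates as `g` tends to
infinity along `l`. -/
def AsympSubindep (act : G → α → α) (μ : Measure α) (l : Filter G) (A : Set α) : Prop :=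
  limsup (fun g => μ (A ∩ act g ⁻¹' A)) l ≤ μ A ^ 2

theorem AsympSubindep.of_measure_eq_zero (hA : μ A = 0) : AsympSubindep act μ l A := by
  have hzero (g : G) : μ (A ∩ act g ⁻¹' A) = 0 := measure_mono_null Set.inter_subset_left hA
  exact limsup_le_of_le (h := .of_forall fun g => (hzero g).trans_le zero_le)

theorem AsympSubindep.prod [IsFiniteMeasure μ] (hA : AsympSubindep act μ l A)
    (hB : AsympSubindep act μ l B) :
    AsympSubindep (fun g p => (act g p.1, act g p.2)) (μ.prod μ) l (A ×ˢ B) := by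
  have hA_lt_top := hA.trans_lt (by finiteness : μ A ^ 2 < ⊤)
  have hB_lt_top := hB.trans_lt (by finiteness : μ B ^ 2 < ⊤)
  have hrect (g : G) :
      (μ.prod μ) (A ×ˢ B ∩ (fun p : α × α => (act g p.1, act g p.2)) ⁻¹' A ×ˢ B) =
        μ (A ∩ act g ⁻¹' A) * μ (B ∩ act g ⁻¹' B) := by
    rw [← Measure.prod_prod, ← Set.prod_inter_prod]
    rfl
  simp only [AsympSubindep, hrect, Measure.prod_prod, mul_pow]
  exact (ENNReal.limsup_mul_le' (.inr hB_lt_top.ne) (.inl hA_lt_top.ne)).trans (mul_le_mul' hA hB)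

variable [Group G]

/-- `act` is a measure-preserving action of `G`, given as an explicit family of maps; the law
`act 1 = id` is left out of the definition. -/
structure IsMeasurePreservingAct (act : G → α → α) (μ : Measure α) : Prop where
  map_mul : ∀ g h x, act (g * h) x = act g (act h x)
  measurePreserving : ∀ g, MeasurePreserving (act g) μ μ

namespace IsMeasurePreservingAct

theorem prod [SFinite μ] (hact : IsMeasurePreservingAct act μ) :
    IsMeasurePreservingAct (fun g (p : α × α) => (act g p.1, act g p.2)) (μ.prod μ) where
  map_mul g h p := Prod.ext (hact.map_mul g h p.1) (hact.map_mul g h p.2)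
  measurePreserving g := (hact.measurePreserving g).prod (hact.measurePreserving g)

theorem measure_preimage_inter_preimage (hact : IsMeasurePreservingAct act μ)
    (hA : MeasurableSet A) (g h : G) :
    μ (act g ⁻¹' A ∩ act h ⁻¹' A) = μ (A ∩ act (h * g⁻¹) ⁻¹' A) := by
  have hcomp : act h ⁻¹' A = act g ⁻¹' (act (h * g⁻¹) ⁻¹' A) := by
    ext x
    simp only [Set.mem_preimage, ← hact.map_mul, inv_mul_cancel_right]
  rw [hcomp, ← Set.preimage_inter, (hact.measurePreserving g).measure_preimage
    (hA.inter ((hact.measurePreserving _).measurable hA)).nullMeasurableSet]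

theorem exists_seq_pairwise_measure_inter_lt [l.NeBot] (hact : IsMeasurePreservingAct act μ)
    (hl : ∀ d, Tendsto (· * d) l l) (hA : MeasurableSet A) {c : ENNReal}
    (hlt : ∀ᶠ g in l, μ (A ∩ act g ⁻¹' A) < c) :
    ∃ d : ℕ → G, Pairwise fun i j => μ (act (d i) ⁻¹' A ∩ act (d j) ⁻¹' A) < c := by
  let r (g h : G) : Prop := μ (act g ⁻¹' A ∩ act h ⁻¹' A) < c
  have : Std.Symm r := ⟨fun g h hgh => by simpa only [r, Set.inter_comm] using hgh⟩
  have hextend (s : Finset G) : ∃ h, ∀ g ∈ s, r g h := by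
    refine Eventually.exists (f := l) ((eventually_all_finset s).2 fun g _ => ?_)
    simpa only [r, hact.measure_preimage_inter_preimage hA] using (hl g⁻¹).eventually hlt
  obtain ⟨d, -, hd⟩ := exists_seq_of_forall_finset_exists' (fun _ => True) r fun s _ =>
    (hextend s).imp fun h hh => ⟨trivial, hh⟩
  exact ⟨d, hd⟩

theorem measure_inter_eq_mul_of_invariant [l.NeBot] [IsProbabilityMeasure μ]
    (hact : IsMeasurePreservingAct act μ) (hl : ∀ d, Tendsto (· * d) l l)
    (hS : MeasurableSet S) (hinv : ∀ g, act g ⁻¹' S = S)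
    (hA : MeasurableSet A) (hasymp : AsympSubindep act μ l A) : μ (A ∩ S) = μ A * μ S := by
  have hreal : μ.real (A ∩ S) = μ.real A * μ.real S := by
    refine measureReal_inter_eq_mul_of_forall_exists_seq μ hS fun ε hε => ?_
    have hlt : μ A ^ 2 < μ A ^ 2 + ENNReal.ofReal ε :=
      ENNReal.lt_add_right (by finiteness) (ENNReal.ofReal_pos.2 hε).ne'
    obtain ⟨d, hd⟩ := hact.exists_seq_pairwise_measure_inter_lt hl hA
      (eventually_lt_of_limsup_lt (hasymp.trans_lt hlt))
    refine ⟨fun i => act (d i) ⁻¹' A, fun i => (hact.measurePreserving _).measurable hA,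
      fun i => (hact.measurePreserving _).measureReal_preimage hA.nullMeasurableSet,
      fun i => ?_, fun i j hij => ?_⟩
    · nth_rw 1 [← hinv (d i)]
      exact (hact.measurePreserving _).measureReal_preimage (hA.inter hS).nullMeasurableSet
    · have hle := ENNReal.toReal_mono (by finiteness) (hd hij).le
      rwa [ENNReal.toReal_add (by finiteness) (by finiteness), ENNReal.toReal_pow,
        ENNReal.toReal_ofReal hε.le] at hle
  rwa [measureReal_def, measureReal_def, measureReal_def, ← ENNReal.toReal_mul,
    ENNReal.toReal_eq_toReal_iff' (by finiteness) (by finiteness)] at hreal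

theorem ergodicAct_of_asympSubindep [l.NeBot] [IsProbabilityMeasure μ]
    (hact : IsMeasurePreservingAct act μ) (hl : ∀ d, Tendsto (· * d) l l)
    (hgen : ‹MeasurableSpace α› = MeasurableSpace.generateFrom C) (hpi : IsPiSystem C)
    (hC : ∀ A ∈ C, AsympSubindep act μ l A) : ErgodicAct act μ := by
  intro S hS hinv
  have hCS : ProbabilityTheory.IndepSets C {S} μ := by
    rw [ProbabilityTheory.IndepSets_iff]
    rintro A _ hA rfl
    exact hact.measure_inter_eq_mul_of_invariant hl hS hinv
      (hgen ▸ MeasurableSpace.measurableSet_generateFrom hA) (hC A hA)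
  have hindep : ProbabilityTheory.IndepSet S S μ :=
    (hCS.indep le_rfl (MeasurableSpace.generateFrom_singleton_le hS) hpi (.singleton S) hgen
      rfl).indepSet_of_measurableSet hS (MeasurableSpace.measurableSet_generateFrom rfl)
  exact (ProbabilityTheory.measure_eq_zero_or_one_of_indepSet_self hindep).imp_right
    (prob_compl_eq_zero_iff hS).2

theorem weaklyMixingAct_of_asympSubindep [l.NeBot] [IsProbabilityMeasure μ]
    (hact : IsMeasurePreservingAct act μ) (hl : ∀ d, Tendsto (· * d) l l)
    (hgen : MeasurableSpace.generateFrom C = ‹MeasurableSpace α›) (hpi : IsPiSystem C)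
    (hspan : IsCountablySpanning C) (hC : ∀ A ∈ C, AsympSubindep act μ l A) :
    WeaklyMixingAct act μ := by
  refine hact.prod.ergodicAct_of_asympSubindep hl
    (generateFrom_eq_prod hgen hgen hspan hspan).symm (hpi.prod hpi) ?_
  rintro _ ⟨A, hA, B, hB, rfl⟩
  exact (hC A hA).prod (hC B hB)

end IsMeasurePreservingAct

end ErgodicityCriterion

section SubgroupSpace

variable {G : Type*} [Group G]

theorem continuous_decide_mem (g : G) :
    Continuous fun H : Subgroup G => @decide (g ∈ H) (Classical.dec _) :=
  continuous_pi_iff.1 (continuous_induced_dom (α := Subgroup G)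
    (f := fun H (g : G) => @decide (g ∈ H) (Classical.dec _))) g

theorem isClopen_setOf_mem (g : G) : IsClopen {H : Subgroup G | g ∈ H} := by
  have hpreimage : {H : Subgroup G | g ∈ H} =
      (fun H : Subgroup G => @decide (g ∈ H) (Classical.dec _)) ⁻¹' {true} := by
    ext H
    simp
  exact hpreimage ▸ (isClopen_discrete {true}).preimage (continuous_decide_mem g)

theorem measurableSet_NSet (F : Set G) : MeasurableSet (NSet F) := by
  have hNSet : NSet F = ⋂ g ∈ F, {H : Subgroup G | g ∈ H} := by
    ext H
    simp [NSet, Set.subset_def]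
  rw [hNSet]
  exact (isClosed_biInter fun g _ => (isClopen_setOf_mem g).isClosed).measurableSet

theorem NSet_inter_NSet (F F' : Set G) : NSet F ∩ NSet F' = NSet (F ∪ F') := by
  ext H
  simp [NSet]

theorem isPiSystem_image_NSet_finite : IsPiSystem (NSet '' {F : Set G | F.Finite}) := by
  rintro _ ⟨F, hF, rfl⟩ _ ⟨F', hF', rfl⟩ -
  exact ⟨F ∪ F', hF.union hF', (NSet_inter_NSet F F').symm⟩

theorem isCountablySpanning_image_NSet_finite :
    IsCountablySpanning (NSet '' {F : Set G | F.Finite}) :=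
  ⟨fun _ => Set.univ, fun _ => ⟨∅, Set.finite_empty, by ext; simp [NSet]⟩, Set.iUnion_const _⟩

theorem generateFrom_image_NSet_finite [Countable G] :
    MeasurableSpace.generateFrom (NSet '' {F : Set G | F.Finite}) = instMeasSub G := by
  apply le_antisymm
  · refine MeasurableSpace.generateFrom_le ?_
    rintro _ ⟨F, -, rfl⟩
    exact measurableSet_NSet F
  · have hcomap : instMeasSub G = MeasurableSpace.comap
        (fun (H : Subgroup G) (g : G) => @decide (g ∈ H) (Classical.dec _))
        MeasurableSpace.pi := by
      rw [BorelSpace.measurable_eq (α := G → Bool)]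
      exact borel_comap
    rw [hcomap, ← measurable_iff_comap_le]
    refine @measurable_pi_lambda _ _ _ (_) _ _ fun g => @measurable_to_bool _ (_) _ ?_
    refine MeasurableSpace.measurableSet_generateFrom ⟨{g}, Set.finite_singleton g, ?_⟩
    ext H
    simp [NSet]

theorem mem_conjSub {g x : G} {H : Subgroup G} : x ∈ conjSub g H ↔ g⁻¹ * x * g ∈ H := by
  refine Subgroup.mem_map_equiv.trans ?_
  rw [MulAut.conj_symm_apply]

theorem conjSub_mul (g h : G) (H : Subgroup G) : conjSub (g * h) H = conjSub g (conjSub h H) := by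
  ext x
  simp only [mem_conjSub, mul_inv_rev, mul_assoc]

theorem continuous_conjSub (g : G) : Continuous (conjSub g : Subgroup G → Subgroup G) := by
  refine continuous_induced_rng.2 (continuous_pi fun x => ?_)
  exact (continuous_decide_mem (g⁻¹ * x * g)).congr fun H => decide_eq_decide.2 mem_conjSub.symm

theorem IsIRS.measurePreserving_conjSub {θ : Measure (Subgroup G)} (hθ : IsIRS θ) (g : G) :
    MeasurePreserving (conjSub g) θ θ :=
  ⟨(continuous_conjSub g).measurable, hθ.2 g⟩

theorem IsIRS.isMeasurePreservingAct {θ : Measure (Subgroup G)} (hθ : IsIRS θ) :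
    IsMeasurePreservingAct (fun g H => conjSub g H) θ where
  map_mul := conjSub_mul
  measurePreserving := hθ.measurePreserving_conjSub

/-- The conjugate `g⁻¹Fg` of a set of group elements; the inverse stands on the left, as in the
product formula for the co-induced IRS. -/
def conjSet (g : G) (F : Set G) : Set G :=
  (fun x => g⁻¹ * x * g) '' F

theorem conjSet_mul (g h : G) (F : Set G) : conjSet (g * h) F = conjSet h (conjSet g F) := by
  simp only [conjSet, Set.image_image, mul_inv_rev, mul_assoc]

theorem conjSet_subset_of_normal {N : Subgroup G} [N.Normal] {F : Set G} (hF : F ⊆ N) (g : G) :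
    conjSet g F ⊆ N := by
  rintro _ ⟨x, hx, rfl⟩
  simpa using ‹N.Normal›.conj_mem x (hF hx) g⁻¹

theorem preimage_conjSub_NSet (g : G) (F : Set G) :
    conjSub g ⁻¹' NSet F = NSet (conjSet g F) := by
  ext H
  simp only [NSet, conjSet, Set.mem_preimage, Set.mem_ofPred_eq, Set.image_subset_iff]
  exact forall₂_congr fun x _ => mem_conjSub

end SubgroupSpace

section CosetWeight

variable {Δ : Type*} [Group Δ] {Γ : Subgroup Δ} {θ : Measure (Subgroup Γ)}

theorem NpullSet_eq_NSet (S : Set Δ) : NpullSet Γ S = NSet ((↑) ⁻¹' S : Set Γ) :=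
  rfl

theorem preimage_coe_conjSet (γ : Γ) (S : Set Δ) :
    ((↑) ⁻¹' conjSet (γ : Δ) S : Set Γ) = conjSet γ ((↑) ⁻¹' S) := by
  ext x
  constructor
  · rintro ⟨y, hy, hyx⟩
    refine ⟨γ * x * γ⁻¹, ?_, by group⟩
    simpa [← hyx, mul_assoc] using hy
  · rintro ⟨y, hy, rfl⟩
    exact ⟨y, hy, rfl⟩

theorem IsIRS.measure_NpullSet_conjSet (hθ : IsIRS θ) (γ : Γ) (S : Set Δ) :
    θ (NpullSet Γ (conjSet (γ : Δ) S)) = θ (NpullSet Γ S) := by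
  rw [NpullSet_eq_NSet, preimage_coe_conjSet, ← preimage_conjSub_NSet,
    (hθ.measurePreserving_conjSub γ).measure_preimage (measurableSet_NSet _).nullMeasurableSet]
  rfl

/-- The factor `θ(N_{t⁻¹Ft})` of the co-induced measure of `N_F` at the coset `q = tΓ`. It does not
depend on the representative `t` when `θ` is an IRS; the definition takes `t = q.out`. -/
noncomputable def cosetWeight (θ : Measure (Subgroup Γ)) (F : Set Δ) (q : Δ ⧸ Γ) : ENNReal :=
  θ (NpullSet Γ (conjSet q.out F))

theorem cosetWeight_mk (hθ : IsIRS θ) (F : Set Δ) (d : Δ) :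
    cosetWeight θ F (d : Δ ⧸ Γ) = θ (NpullSet Γ (conjSet d F)) := by
  obtain ⟨γ, hγ⟩ := QuotientGroup.mk_out_eq_mul Γ d
  rw [cosetWeight, hγ, conjSet_mul, hθ.measure_NpullSet_conjSet]

theorem cosetWeight_conjSet (hθ : IsIRS θ) (g : Δ) (F : Set Δ) (q : Δ ⧸ Γ) :
    cosetWeight θ (conjSet g F) q = cosetWeight θ F (g • q) := by
  induction q using QuotientGroup.induction_on with
  | H d => rw [MulAction.Quotient.smul_coe, smul_eq_mul, cosetWeight_mk hθ, cosetWeight_mk hθ,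
      conjSet_mul]

theorem cosetWeight_anti {F F' : Set Δ} (hF : F ⊆ F') (q : Δ ⧸ Γ) :
    cosetWeight θ F' q ≤ cosetWeight θ F q :=
  measure_mono fun _ hΛ x hx => hΛ x (Set.image_mono hF hx)

theorem cosetWeight_le_one [IsProbabilityMeasure θ] (F : Set Δ) (q : Δ ⧸ Γ) :
    cosetWeight θ F q ≤ 1 :=
  prob_le_one

theorem prod_cosetWeight_union_conjSet_le [DecidableEq (Δ ⧸ Γ)] (hθ : IsIRS θ) (F : Set Δ) {g : Δ}
    {K : Finset (Δ ⧸ Γ)} (hK : Disjoint K (K.image (g⁻¹ • ·))) :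
    ∏ q ∈ K ∪ K.image (g⁻¹ • ·), cosetWeight θ (F ∪ conjSet g F) q ≤
      (∏ q ∈ K, cosetWeight θ F q) ^ 2 := by
  rw [Finset.prod_union hK, pow_two, Finset.prod_image (MulAction.injective g⁻¹).injOn]
  refine mul_le_mul' (Finset.prod_le_prod' fun q _ => cosetWeight_anti Set.subset_union_left q)
    (Finset.prod_le_prod' fun q _ => ?_)
  calc cosetWeight θ (F ∪ conjSet g F) (g⁻¹ • q)
      ≤ cosetWeight θ (conjSet g F) (g⁻¹ • q) := cosetWeight_anti Set.subset_union_right _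
    _ = cosetWeight θ F q := by rw [cosetWeight_conjSet hθ, smul_inv_smul]

end CosetWeight

section Coinduced

open Filter

variable {Δ : Type*} [Group Δ] {Γ : Subgroup Δ} {T : Set Δ} {θ : Measure (Subgroup Γ)}
  {ν : Measure (Subgroup Δ)} {F : Set Δ}

theorem IsLeftTransversal.bijective_mk (hT : IsLeftTransversal Γ T) :
    Function.Bijective fun t : T => ((t : Δ) : Δ ⧸ Γ) := by
  constructor
  · rintro ⟨t, ht⟩ ⟨t', ht'⟩ htt'
    exact Subtype.ext ((hT t).unique ⟨ht, by simp⟩ ⟨ht', QuotientGroup.eq.1 htt'⟩)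
  · intro q
    induction q using QuotientGroup.induction_on with
    | H d =>
      obtain ⟨t, ⟨ht, hdt⟩, -⟩ := hT d
      exact ⟨⟨t, ht⟩, (QuotientGroup.eq.2 hdt).symm⟩

theorem CindSpec.hasProd_cosetWeight (hc : CindSpec Γ T θ ν) (hθ : IsIRS θ)
    (hT : IsLeftTransversal Γ T) (hF : F.Finite) (hcore : F ⊆ Γ.normalCore) :
    HasProd (cosetWeight θ F) (ν (NSet F)) := by
  have := hθ.1
  lift F to Finset Δ using hF
  have htprod : ν (NSet (F : Set Δ)) = ∏' q, cosetWeight θ (F : Set Δ) q := by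
    rw [(hc F).2 hcore, ← (Equiv.ofBijective _ hT.bijective_mk).tprod_eq]
    exact tprod_congr fun t => (cosetWeight_mk hθ _ (t : Δ)).symm
  rw [htprod, ENNReal.tprod_eq_iInf_prod (cosetWeight_le_one _)]
  exact ENNReal.hasProd_iInf_prod (cosetWeight_le_one _)

theorem CindSpec.measure_NSet_le_prod (hc : CindSpec Γ T θ ν) (hθ : IsIRS θ)
    (hT : IsLeftTransversal Γ T) (hF : F.Finite) (hcore : F ⊆ Γ.normalCore)
    (K : Finset (Δ ⧸ Γ)) : ν (NSet F) ≤ ∏ q ∈ K, cosetWeight θ F q := by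
  have := hθ.1
  rw [(hc.hasProd_cosetWeight hθ hT hF hcore).unique
    (ENNReal.hasProd_iInf_prod (cosetWeight_le_one F))]
  exact iInf_le _ K

theorem CindSpec.asympSubindep_NSet (hc : CindSpec Γ T θ ν) (hθ : IsIRS θ)
    (hT : IsLeftTransversal Γ T) (hF : F.Finite) :
    AsympSubindep (fun δ H => conjSub δ H) ν (escapeFilter Δ (Δ ⧸ Γ)) (NSet F) := by
  classical
  by_cases hcore : F ⊆ Γ.normalCore
  · have hlimsup (K : Finset (Δ ⧸ Γ)) :
        limsup (fun g => ν (NSet F ∩ conjSub g ⁻¹' NSet F)) (escapeFilter Δ (Δ ⧸ Γ)) ≤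
          (∏ q ∈ K, cosetWeight θ F q) ^ 2 := by
      refine limsup_le_of_le (h := ?_)
      filter_upwards [eventually_disjoint_image_inv_smul K] with g hg
      rw [preimage_conjSub_NSet, NSet_inter_NSet]
      exact (hc.measure_NSet_le_prod hθ hT (hF.union (hF.image _))
        (Set.union_subset hcore (conjSet_subset_of_normal hcore g)) _).trans
        (prod_cosetWeight_union_conjSet_le hθ F hg)
    exact ge_of_tendsto' (ENNReal.Tendsto.pow (hc.hasProd_cosetWeight hθ hT hF hcore)) hlimsup
  · refine AsympSubindep.of_measure_eq_zero ?_
    lift F to Finset Δ using hF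
    exact (hc F).1 hcore

end Coinduced

/-- If `[Δ : Γ] = ∞` then the co-induced IRS `CIND_Γ^Δ(θ)` is weakly mixing for the
conjugation action of `Δ`, for every IRS `θ` of `Γ`. -/
theorem coinduced_IRS_weaklyMixing {Δ : Type*} [Group Δ] [Countable Δ] (Γ : Subgroup Δ)
    (hinf : Infinite (Δ ⧸ Γ))
    (θ : Measure (Subgroup ↥Γ)) (hθ : IsIRS θ)
    (T : Set Δ) (hT : IsLeftTransversal Γ T)
    (ν : Measure (Subgroup Δ)) (hν : IsIRS ν) (hc : CindSpec Γ T θ ν) :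
    WeaklyMixingAct (fun (δ : Δ) (H : Subgroup Δ) => conjSub δ H) ν := by
  have := hν.1
  have := escapeFilter_quotient_neBot Γ
  refine hν.isMeasurePreservingAct.weaklyMixingAct_of_asympSubindep
    (tendsto_mul_right_escapeFilter (X := Δ ⧸ Γ)) generateFrom_image_NSet_finite
    isPiSystem_image_NSet_finite isCountablySpanning_image_NSet_finite ?_
  rintro _ ⟨F, hF, rfl⟩
  exact hc.asympSubindep_NSet hθ hT hF

end IRSPaper
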